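/- Let R be a noetherian commutative local ring with residue field of characteristic p > 0 such that R is p-local, and let G be a finite group such that p^n annihilates H^i(G, M) for all i ≥ 1, all R-modules M, and some fixed n. Let I ⊂ R be an ideal with I² = 0 and set R'' = R/I. Then for every x ∈ H^j(G, R'') with j ≥ 1, the element x^{p^n} lies in the image of the natural map H^*(G, R) → H^*(G, R''). -/

import Mathlib

/-!
STATEMENT 14: Let R be a noetherian commutative local ring with residue field of characteristic
p > 0 such that R is p-local, and let G be a finite group such that p^n annihilates H^i(G,M)
for all i ≥ 1 and all R-modules M (trivial action).  Let I ⊂ R be an ideal with I² = 0 and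
R'' = R/I.  Then for every x ∈ H^j(G,R'') with j ≥ 1, the element x^{p^n} lies in the image of
the natural map H^*(G,R) → H^*(G,R'').

Group cohomology is rendered at the level of inhomogeneous cochains (with the standard
differential, specialised to trivial coefficients), cohomology classes being represented by
cocycles, and cup powers by their explicit formula for trivial coefficients.
-/

universe u

/-- The inhomogeneous differential on cochains of `G` with trivial coefficients in `M`. -/
def gdiff (G : Type*) [Group G] (M : Type*) [AddCommGroup M] (n : ℕ)
    (f : (Fin n → G) → M) : (Fin (n + 1) → G) → M :=
  fun g => f (fun i => g i.succ) +
    ∑ j : Fin (n + 1), ((-1 : ℤ) ^ ((j : ℕ) + 1)) • f (Fin.contractNth j (· * ·) g)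

/-- The `k`-fold cup power of a degree-`j` cochain with coefficients in a commutative ring
(trivial action), given by its explicit formula. -/
def cupPow (G : Type*) (S : Type*) [CommRing S] (j k : ℕ)
    (f : (Fin j → G) → S) : (Fin (k * j) → G) → S :=
  fun g => ∏ i : Fin k, f (fun t : Fin j =>
    g ⟨i.1 * j + t.1, by
      have hi : i.1 + 1 ≤ k := i.2
      calc i.1 * j + t.1 < i.1 * j + j := by omega
        _ = (i.1 + 1) * j := by ring
        _ ≤ k * j := Nat.mul_le_mul_right j hi⟩)

/-!
Reversing the arguments of a homogeneous cochain is, up to sign, an anti-automorphism for the cup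
product and is chain homotopic to the identity. Because `I * I = ⊥`, it follows that a cochain that
is a cocycle modulo `I` commutes, up to the usual sign and coboundaries, with every `I`-valued
cocycle. Hence a lift `X` of a degree `j` cocycle over `R ⧸ I` satisfies
`d (X ^ N) ≡ (∑ i < N, ((-1) ^ j) ^ i) • X ^ (N - 1) ∪ dX` modulo coboundaries of `I`-valued
cochains. For `j` even the coefficient is `N`, which kills the class. For `j` odd it is `0` or `1`,
and it is `1` only for odd `N`; then the class of `X ^ (N - 1) ∪ dX` is killed by `N`, and for
`N ≥ 3` also by `2`: in `X ∪ X ∪ dX`, moving the first factor to the end or only exchanging the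
last two gives the same product with opposite signs. As `N - 1` is even, the class vanishes.
Subtracting an `I`-valued cochain with the same differential turns `X ^ N` into a cocycle.
-/

open scoped MonoidAlgebra

namespace HomogeneousCochain

noncomputable section

section Reindexing

/-- The increasing map `ℕ → ℕ` whose image omits exactly `i`. -/
def coface (i : ℕ) : Function.End ℕ := fun t => if t < i then t else t + 1

/-- The sequence `0, σ 0, σ 1, …`: on simplices, the cone with apex the vertex `0`. -/
def consZero (σ : Function.End ℕ) : Function.End ℕ := fun t => Nat.casesOn t 0 σ

/-- The permutation of `ℕ` reversing the order of `0, …, m - 1` and fixing all `t ≥ m`. -/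
def reflect (m : ℕ) : Function.End ℕ := fun t => if t < m then m - 1 - t else t

lemma coface_of_lt {i t : ℕ} (h : t < i) : coface i t = t := if_pos h

lemma coface_of_le {i t : ℕ} (h : i ≤ t) : coface i t = t + 1 := if_neg h.not_gt

lemma reflect_of_lt {m t : ℕ} (h : t < m) : reflect m t = m - 1 - t := if_pos h

lemma consZero_mul_coface_zero (σ : Function.End ℕ) : consZero σ * coface 0 = σ := rfl

lemma consZero_mul_coface_succ (σ : Function.End ℕ) (i : ℕ) :
    consZero σ * coface (i + 1) = consZero (σ * coface i) := by
  funext t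
  cases t with
  | zero => rfl
  | succ t =>
    change consZero σ (if t + 1 < i + 1 then t + 1 else t + 1 + 1) = σ (if t < i then t else t + 1)
    simp only [add_lt_add_iff_right]
    split_ifs <;> rfl

lemma consZero_succ : consZero Nat.succ = 1 := by
  funext t
  cases t <;> rfl

lemma reflect_zero : reflect 0 = 1 := by
  funext t
  simp [reflect, Function.End.one_def]

lemma reflect_succ_mul_coface {m i : ℕ} (hi : i ≤ m) :
    reflect (m + 1) * coface i = coface (m - i) * reflect m := by
  funext t
  change reflect (m + 1) (coface i t) = coface (m - i) (reflect m t)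
  simp only [reflect, coface]
  split_ifs <;> omega

variable (R : Type*) [CommRing R]

/-- The alternating sum of the faces of the simplex on the vertices `0, …, m`, in the monoid algebra
of reindexings of sequences. Right multiplication by it is the simplicial boundary operator. -/
def boundary (m : ℕ) : R[Function.End ℕ] :=
  ∑ i ∈ Finset.range (m + 1), .single (coface i) ((-1) ^ i)

/-- The linear extension of `consZero`, a contracting homotopy for right multiplication by
`boundary`. -/
def cone : R[Function.End ℕ] →ₗ[R] R[Function.End ℕ] :=
  MonoidAlgebra.mapDomainLinearMap R R consZero

/-- Vertex reversal on simplices with `m` vertices; the sign `(-1) ^ (m choose 2)` of the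
permutation makes it commute with `boundary`. -/
def reversal (m : ℕ) : R[Function.End ℕ] := .single (reflect m) ((-1) ^ m.choose 2)

/-- A chain homotopy from the identity to `reversal`, obtained by coning off, degree by degree, the
cycle it has to bound. The index is the number of vertices. -/
def homotopy : ℕ → R[Function.End ℕ]
  | 0 => 0
  | m + 1 => cone R (reversal R (m + 1) - 1 - boundary R m * homotopy m)

variable {R}

lemma cone_single (σ : Function.End ℕ) (r : R) :
    cone R (.single σ r) = .single (consZero σ) r :=
  MonoidAlgebra.mapDomainLinearMap_single ..

lemma cone_mul_boundary_zero (a : R[Function.End ℕ]) : cone R a * boundary R 0 = a := by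
  induction a using MonoidAlgebra.induction_linear <;>
    simp_all [boundary, add_mul, cone_single, consZero_mul_coface_zero]

lemma cone_mul_single_coface_succ (a : R[Function.End ℕ]) (i : ℕ) (r : R) :
    cone R a * .single (coface (i + 1)) r = cone R (a * .single (coface i) r) := by
  induction a using MonoidAlgebra.induction_linear <;>
    simp_all [add_mul, cone_single, consZero_mul_coface_succ]

lemma cone_mul_boundary_succ (a : R[Function.End ℕ]) (m : ℕ) :
    cone R a * boundary R (m + 1) = a - cone R (a * boundary R m) := by
  have h : boundary R (m + 1) = boundary R 0
      - ∑ i ∈ Finset.range (m + 1), .single (coface (i + 1)) ((-1) ^ i) := by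
    simp [boundary, Finset.sum_range_succ' _ (m + 1), pow_succ, neg_add_eq_sub]
  rw [h, mul_sub, cone_mul_boundary_zero, boundary]
  simp only [Finset.mul_sum, map_sum, cone_mul_single_coface_succ]

lemma boundary_succ_mul_boundary (m : ℕ) : boundary R (m + 1) * boundary R m = 0 := by
  -- `s` forgets the initial vertex `0`
  let s : R[Function.End ℕ] := .single Nat.succ 1
  have hcone : cone R s = 1 := by
    rw [MonoidAlgebra.one_def, ← consZero_succ]; exact cone_single _ _
  have hs (m : ℕ) : boundary R (m + 1) = s - cone R (s * boundary R m) := by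
    rw [← cone_mul_boundary_succ, hcone, one_mul]
  induction m with
  | zero => rw [hs, sub_mul, cone_mul_boundary_zero, sub_self]
  | succ m ih =>
    rw [hs, sub_mul, cone_mul_boundary_succ, mul_assoc, ih, mul_zero, map_zero, sub_zero, sub_self]

lemma reversal_succ_mul_boundary (m : ℕ) :
    reversal R (m + 1) * boundary R m = boundary R m * reversal R m := by
  simp only [reversal, boundary, Finset.mul_sum, Finset.sum_mul, MonoidAlgebra.single_mul_single]
  rw [← Finset.sum_range_reflect]
  refine Finset.sum_congr rfl fun i hi => ?_
  obtain ⟨s, rfl⟩ := Nat.exists_eq_add_of_le (Nat.lt_succ_iff.1 (Finset.mem_range.1 hi))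
  have hsign : (-1 : R) ^ (i + s + 1).choose 2 * (-1) ^ s = (-1) ^ i * (-1) ^ (i + s).choose 2 := by
    rw [Nat.choose_succ_succ' (i + s) 1, Nat.choose_one_right, pow_add, pow_add, mul_right_comm,
      mul_assoc _ _ ((-1 : R) ^ s), ← mul_pow]
    simp
  rw [Nat.add_sub_cancel, Nat.add_sub_cancel_left, reflect_succ_mul_coface (Nat.le_add_left s i),
    Nat.add_sub_cancel, hsign]

lemma homotopy_succ_mul_boundary_succ (m : ℕ) :
    homotopy R (m + 1) * boundary R (m + 1)
      = reversal R (m + 1) - 1 - boundary R m * homotopy R m := by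
  suffices h : (reversal R (m + 1) - 1 - boundary R m * homotopy R m) * boundary R m = 0 by
    rw [homotopy, cone_mul_boundary_succ, h, map_zero, sub_zero]
  have h : boundary R m * (reversal R m - 1 - homotopy R m * boundary R m) = 0 := by
    cases m with
    | zero => simp [reversal, reflect_zero, homotopy, MonoidAlgebra.one_def]
    | succ m => rw [homotopy_succ_mul_boundary_succ m, sub_sub_cancel, ← mul_assoc,
        boundary_succ_mul_boundary, zero_mul]
  rw [← h, sub_mul, sub_mul, reversal_succ_mul_boundary, mul_sub, mul_sub, mul_one, one_mul,
    mul_assoc]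

variable (R) in
/-- The combinations of reindexings mapping `{t | t < k}` into `{t | t < l}`: these turn functions
of the first `k` terms of a sequence into functions of its first `l` terms. -/
def operators (k l : ℕ) : Submodule R R[Function.End ℕ] :=
  .span R (MonoidAlgebra.of R _ '' {σ | Set.MapsTo σ (Set.Iio k) (Set.Iio l)})

variable {k l m : ℕ} {a b : R[Function.End ℕ]}

lemma single_mem_operators {σ : Function.End ℕ} (hσ : Set.MapsTo σ (Set.Iio k) (Set.Iio l))
    (r : R) : .single σ r ∈ operators R k l := by
  have h : .of R _ σ ∈ operators R k l := Submodule.subset_span ⟨σ, hσ, rfl⟩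
  simpa using Submodule.smul_mem _ r h

lemma mul_mem_operators (ha : a ∈ operators R l m) (hb : b ∈ operators R k l) :
    a * b ∈ operators R k m := by
  have h := Submodule.mul_mem_mul ha hb
  rw [operators, operators, Submodule.span_mul_span] at h
  refine Submodule.span_mono ?_ h
  rintro _ ⟨_, ⟨σ, hσ, rfl⟩, _, ⟨τ, hτ, rfl⟩, rfl⟩
  exact ⟨σ * τ, hσ.comp hτ, map_mul _ _ _⟩

lemma boundary_mem_operators (m : ℕ) : boundary R m ∈ operators R m (m + 1) := by
  refine Submodule.sum_mem _ fun i _ => single_mem_operators (fun t ht => ?_) _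
  simp only [coface, Set.mem_Iio] at ht ⊢
  split_ifs <;> omega

lemma reversal_mem_operators (m : ℕ) : reversal R m ∈ operators R m m := by
  refine single_mem_operators (fun t ht => ?_) _
  rw [Set.mem_Iio] at ht ⊢
  rw [reflect_of_lt ht]
  omega

lemma cone_mem_operators (ha : a ∈ operators R k (l + 1)) :
    cone R a ∈ operators R (k + 1) (l + 1) := by
  suffices h : operators R k (l + 1) ≤ (operators R (k + 1) (l + 1)).comap (cone R) from h ha
  rw [operators, Submodule.span_le]
  rintro _ ⟨σ, hσ, rfl⟩
  rw [MonoidAlgebra.of_apply, SetLike.mem_coe, Submodule.mem_comap, cone_single]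
  refine single_mem_operators (fun t ht => ?_) _
  cases t with
  | zero => exact Nat.succ_pos l
  | succ t => exact hσ (Nat.lt_of_succ_lt_succ ht)

lemma homotopy_mem_operators (m : ℕ) : homotopy R m ∈ operators R (m + 1) m := by
  induction m with
  | zero => exact Submodule.zero_mem _
  | succ m ih =>
    have hone : 1 ∈ operators R (m + 1) (m + 1) := single_mem_operators (Set.mapsTo_id _) 1
    exact cone_mem_operators (sub_mem (sub_mem (reversal_mem_operators _) hone)
      (mul_mem_operators (boundary_mem_operators m) ih))

end Reindexing

section Cochains

variable (G : Type*) (R : Type*) [CommRing R]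

/-- The action of reindexings on functions of sequences: `σ` sends `F` to `w ↦ F (w ∘ σ)`. -/
def act : R[Function.End ℕ] →ₐ[R] Module.End R ((ℕ → G) → R) :=
  MonoidAlgebra.lift R (Module.End R ((ℕ → G) → R)) (Function.End ℕ)
    { toFun σ := LinearMap.funLeft R R fun w => w ∘ σ
      map_one' := rfl
      map_mul' _ _ := rfl }

/-- The homogeneous differential on cochains of degree `n`. A homogeneous `n`-cochain is encoded as
a function on all sequences in `G` that depends only on the `n + 1` terms `w 0, …, w n`. -/
def d (n : ℕ) : ((ℕ → G) → R) →ₗ[R] (ℕ → G) → R := act G R (boundary R (n + 1))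

/-- The signed reversal of the `n + 1` arguments of a cochain of degree `n`. -/
def reverse (n : ℕ) : ((ℕ → G) → R) →ₗ[R] (ℕ → G) → R := act G R (reversal R (n + 1))

/-- The Alexander–Whitney cup product of a cochain of degree `p` with a cochain of any degree. -/
def cup (p : ℕ) : ((ℕ → G) → R) →ₗ[R] ((ℕ → G) → R) →ₗ[R] (ℕ → G) → R :=
  (LinearMap.mul R ((ℕ → G) → R)).compl₂ (LinearMap.funLeft R R fun w t => w (t + p))

variable {G R}

/-- The `k`-fold cup power of a cochain of degree `j`. -/
def power (j : ℕ) (X : (ℕ → G) → R) : ℕ → (ℕ → G) → R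
  | 0 => 1
  | k + 1 => cup G R (j * k) (power j X k) X

variable {F K : (ℕ → G) → R} {p q : ℕ}

lemma act_single (σ : Function.End ℕ) (r : R) (F : (ℕ → G) → R) (w : ℕ → G) :
    act G R (.single σ r) F w = r * F (w ∘ σ) := by
  rw [act, MonoidAlgebra.lift_single]
  rfl

lemma d_apply (n : ℕ) (F : (ℕ → G) → R) (w : ℕ → G) :
    d G R n F w = ∑ i ∈ Finset.range (n + 2), (-1) ^ i * F (w ∘ coface i) := by
  simp [d, boundary, act_single]

lemma reverse_apply (n : ℕ) (F : (ℕ → G) → R) (w : ℕ → G) :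
    reverse G R n F w = (-1) ^ (n + 1).choose 2 * F (w ∘ reflect (n + 1)) :=
  act_single ..

lemma cup_apply (p : ℕ) (F K : (ℕ → G) → R) (w : ℕ → G) :
    cup G R p F K w = F w * K fun t => w (t + p) := rfl

lemma d_d (n : ℕ) (F : (ℕ → G) → R) : d G R (n + 1) (d G R n F) = 0 := by
  rw [d, d, ← Module.End.mul_apply, ← map_mul, boundary_succ_mul_boundary, map_zero,
    LinearMap.zero_apply]

lemma d_one : d G R 0 1 = 0 := by
  ext w
  simp [d_apply, Finset.sum_range_succ]

lemma d_reverse (n : ℕ) (F : (ℕ → G) → R) :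
    d G R n (reverse G R n F) = reverse G R (n + 1) (d G R n F) := by
  simp only [d, reverse, ← Module.End.mul_apply, ← map_mul, reversal_succ_mul_boundary]

lemma act_homotopy_d (n : ℕ) (F : (ℕ → G) → R) :
    act G R (homotopy R (n + 1)) (d G R n F)
      = reverse G R n F - F - act G R (boundary R n) (act G R (homotopy R n) F) := by
  simp only [d, reverse, ← Module.End.mul_apply, ← map_mul, homotopy_succ_mul_boundary_succ,
    map_sub, map_one, LinearMap.sub_apply, Module.End.one_apply]

lemma one_cup (F : (ℕ → G) → R) : cup G R 0 1 F = F := by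
  ext w
  simp [cup_apply]

lemma cup_assoc (p q : ℕ) (F K L : (ℕ → G) → R) :
    cup G R (p + q) (cup G R p F K) L = cup G R p F (cup G R q K L) := by
  ext w
  simp only [cup_apply, mul_assoc, add_assoc, add_comm p q]

lemma d_cup (hF : DependsOn F (Set.Iio (p + 1))) (q : ℕ) (K : (ℕ → G) → R) :
    d G R (p + q) (cup G R p F K)
      = cup G R (p + 1) (d G R p F) K + (-1 : R) ^ p • cup G R p F (d G R q K) := by
  ext w
  have hshift (i : ℕ) (hi : i ≤ p) :
      (fun t => (w ∘ coface i) (t + p)) = fun t => w (t + (p + 1)) :=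
    funext fun t => congrArg w (coface_of_le (le_add_left hi))
  have hfix (i : ℕ) : F (w ∘ coface (p + 1 + i)) = F w := hF fun t ht =>
    congrArg w (coface_of_lt (ht.trans_le (Nat.le_add_right _ _)))
  have hcoface (i : ℕ) : (fun t => (w ∘ coface (p + 1 + i)) (t + p))
      = (fun t => w (t + p)) ∘ coface (i + 1) := by
    refine funext fun t => congrArg w ?_
    simp only [coface]
    split_ifs <;> omega
  have hfirst : ∑ i ∈ Finset.range (p + 1), (-1) ^ i * cup G R p F K (w ∘ coface i)
      = (∑ i ∈ Finset.range (p + 1), (-1) ^ i * F (w ∘ coface i)) * K fun t => w (t + (p + 1)) := by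
    rw [Finset.sum_mul]
    refine Finset.sum_congr rfl fun i hi => ?_
    rw [cup_apply, hshift i (Nat.lt_succ_iff.1 (Finset.mem_range.1 hi)), mul_assoc]
  have hlast : ∑ i ∈ Finset.range (q + 1),
        (-1) ^ (p + 1 + i) * cup G R p F K (w ∘ coface (p + 1 + i))
      = (-1) ^ p * (F w * ∑ i ∈ Finset.range (q + 1),
        (-1) ^ (i + 1) * K ((fun t => w (t + p)) ∘ coface (i + 1))) := by
    simp only [Finset.mul_sum, cup_apply, hfix, hcoface]
    exact Finset.sum_congr rfl fun i _ => by ring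
  have hzero : (fun t => w (t + p)) ∘ coface 0 = fun t => w (t + (p + 1)) :=
    funext fun t => congrArg w (by rw [coface_of_le t.zero_le, add_right_comm]; rfl)
  simp only [Pi.add_apply, Pi.smul_apply, smul_eq_mul, cup_apply _ _ (d G R q K),
    cup_apply _ (d G R p F), d_apply]
  rw [show p + q + 2 = (p + 1) + (q + 1) by ring, Finset.sum_range_add, hfirst, hlast,
    Finset.sum_range_succ _ (p + 1), Finset.sum_range_succ' _ (q + 1), hzero, ← hfix 0, add_zero]
  ring

lemma choose_two_add_add_one (p q : ℕ) :
    (p + q + 1).choose 2 = p * q + (q + 1).choose 2 + (p + 1).choose 2 := by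
  qify [Nat.cast_choose_two]
  ring

lemma reverse_cup (hF : DependsOn F (Set.Iio (p + 1))) (hK : DependsOn K (Set.Iio (q + 1))) :
    reverse G R (p + q) (cup G R p F K)
      = (-1 : R) ^ (p * q) • cup G R q (reverse G R q K) (reverse G R p F) := by
  ext w
  have hleft : F (w ∘ reflect (p + q + 1)) = F ((fun t => w (t + q)) ∘ reflect (p + 1)) :=
    hF fun t ht => congrArg w <| by
      rw [reflect_of_lt ht, reflect_of_lt (by grind)]
      grind
  have hright : K (fun t => (w ∘ reflect (p + q + 1)) (t + p)) = K (w ∘ reflect (q + 1)) :=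
    hK fun t ht => congrArg w <| by
      rw [reflect_of_lt ht, reflect_of_lt (by grind)]
      grind
  simp only [Pi.smul_apply, smul_eq_mul, reverse_apply, cup_apply, hleft, hright,
    choose_two_add_add_one, pow_add]
  ring

lemma power_apply (j : ℕ) (X : (ℕ → G) → R) (k : ℕ) (w : ℕ → G) :
    power j X k w = ∏ i ∈ Finset.range k, X fun t => w (t + j * i) := by
  induction k with
  | zero => rfl
  | succ k ih => rw [power, cup_apply, ih, Finset.prod_range_succ]

end Cochains

section Cohomology

variable {G : Type*} [Group G] {R : Type*} [CommRing R]

variable (G) in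
/-- The homogeneous cochains of degree `n` with values in the ideal `I`: functions of the first
`n + 1` terms of a sequence, invariant under simultaneous left translation of all terms. -/
def cochains (I : Ideal R) (n : ℕ) : Submodule R ((ℕ → G) → R) where
  carrier := {F | (∀ w, F w ∈ I) ∧ DependsOn F (Set.Iio (n + 1)) ∧ ∀ (g : G) w, F (g • w) = F w}
  add_mem' hF hK := ⟨fun w => I.add_mem (hF.1 w) (hK.1 w),
    fun _ _ h => congrArg₂ (· + ·) (hF.2.1 h) (hK.2.1 h),
    fun g w => congrArg₂ (· + ·) (hF.2.2 g w) (hK.2.2 g w)⟩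
  zero_mem' := ⟨fun _ => I.zero_mem, fun _ _ _ => rfl, fun _ _ => rfl⟩
  smul_mem' r _ hF := ⟨fun w => I.mul_mem_left r (hF.1 w),
    fun _ _ h => congrArg (r * ·) (hF.2.1 h), fun g w => congrArg (r * ·) (hF.2.2 g w)⟩

variable (G) in
/-- The coboundaries of degree `n` of cochains with values in `I`. -/
def coboundaries (I : Ideal R) : ℕ → Submodule R ((ℕ → G) → R)
  | 0 => ⊥
  | n + 1 => (cochains G I n).map (d G R n)

variable (G) in
/-- The cocycles of degree `n` with values in `I`. -/
def cocycles (I : Ideal R) (n : ℕ) : Submodule R ((ℕ → G) → R) :=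
  cochains G I n ⊓ LinearMap.ker (d G R n)

variable (G) in
/-- The `R`-valued cochains of degree `n` that are cocycles modulo `I`, that is, the lifts of the
cocycles with values in `R ⧸ I`. -/
def cocyclesMod (I : Ideal R) (n : ℕ) : Submodule R ((ℕ → G) → R) :=
  cochains G ⊤ n ⊓ (cochains G I (n + 1)).comap (d G R n)

variable {I J : Ideal R} {m n p q : ℕ} {F K : (ℕ → G) → R}

lemma cochains_mono (h : I ≤ J) : cochains G I n ≤ cochains G J n :=
  fun _ hF => ⟨fun w => h (hF.1 w), hF.2⟩

lemma act_mem_cochains {a : R[Function.End ℕ]} (ha : a ∈ operators R (n + 1) (m + 1))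
    (hF : F ∈ cochains G I n) : act G R a F ∈ cochains G I m := by
  suffices h : operators R (n + 1) (m + 1)
      ≤ (cochains G I m).comap ((act G R).toLinearMap.flip F) from h ha
  rw [operators, Submodule.span_le]
  rintro _ ⟨σ, hσ, rfl⟩
  have hact : act G R (.of R _ σ) F = fun w => F (w ∘ σ) :=
    funext fun w => (act_single σ 1 F w).trans (one_mul _)
  change act G R (.of R _ σ) F ∈ cochains G I m
  rw [hact]
  exact ⟨fun w => hF.1 _, fun v w h => hF.2.1 fun t ht => h _ (hσ ht), fun g w => hF.2.2 g _⟩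

lemma reverse_mem_cochains (hF : F ∈ cochains G I n) : reverse G R n F ∈ cochains G I n :=
  act_mem_cochains (reversal_mem_operators _) hF

lemma cup_mem_cochains (hF : F ∈ cochains G I p) (hK : K ∈ cochains G J q) :
    cup G R p F K ∈ cochains G (I * J) (p + q) := by
  refine ⟨fun w => Ideal.mul_mem_mul (hF.1 _) (hK.1 _), fun v w h => ?_, fun g w => ?_⟩
  · exact congrArg₂ (· * ·) (hF.2.1 fun t ht => h t (by grind))
      (hK.2.1 fun t ht => h (t + p) (by grind))
  · exact congrArg₂ (· * ·) (hF.2.2 g w) (hK.2.2 g _)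

lemma cup_mem_cochains_left (hF : F ∈ cochains G I p) (hK : K ∈ cochains G J q) :
    cup G R p F K ∈ cochains G I (p + q) :=
  cochains_mono Ideal.mul_le_left (cup_mem_cochains hF hK)

lemma cup_mem_cochains_right (hF : F ∈ cochains G I p) (hK : K ∈ cochains G J q) :
    cup G R p F K ∈ cochains G J (p + q) :=
  cochains_mono Ideal.mul_le_right (cup_mem_cochains hF hK)

lemma cup_eq_zero (hI : I * I = ⊥) (hF : F ∈ cochains G I p) (hK : K ∈ cochains G I q) :
    cup G R p F K = 0 :=
  funext fun w => (Submodule.mem_bot R).1 (hI ▸ (cup_mem_cochains hF hK).1 w)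

lemma d_mem_coboundaries (hF : F ∈ cochains G I n) : d G R n F ∈ coboundaries G I (n + 1) :=
  Submodule.mem_map_of_mem hF

lemma d_mem_cocycles {X : (ℕ → G) → R} (hX : X ∈ cocyclesMod G I n) :
    d G R n X ∈ cocycles G I (n + 1) :=
  ⟨hX.2, d_d n X⟩

lemma reverse_mem_cocyclesMod (hF : F ∈ cocyclesMod G I n) :
    reverse G R n F ∈ cocyclesMod G I n :=
  ⟨reverse_mem_cochains hF.1, Submodule.mem_comap.2 <|
    d_reverse n F ▸ reverse_mem_cochains hF.2⟩

lemma reverse_sub_mem_coboundaries (hF : F ∈ cochains G I n) :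
    reverse G R n F - F - act G R (homotopy R (n + 1)) (d G R n F) ∈ coboundaries G I n := by
  rw [act_homotopy_d, sub_sub_cancel]
  cases n with
  | zero => simp [homotopy]
  | succ n => exact d_mem_coboundaries (act_mem_cochains (homotopy_mem_operators _) hF)

lemma cup_mem_cocyclesMod (hF : F ∈ cocyclesMod G I p) (hK : K ∈ cocyclesMod G I q) :
    cup G R p F K ∈ cocyclesMod G I (p + q) := by
  refine ⟨cup_mem_cochains_left hF.1 hK.1, Submodule.mem_comap.2 ?_⟩
  rw [d_cup hF.1.2.1]
  refine add_mem ?_ (Submodule.smul_mem _ _ (cup_mem_cochains_right hF.1 hK.2))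
  rw [add_right_comm]
  exact cup_mem_cochains_left hF.2 hK.1

lemma cup_mem_cocycles (hI : I * I = ⊥) (hF : F ∈ cocyclesMod G I p) (hK : K ∈ cocycles G I q) :
    cup G R p F K ∈ cocycles G I (p + q) := by
  refine ⟨cup_mem_cochains_right hF.1 hK.1, LinearMap.mem_ker.2 ?_⟩
  rw [d_cup hF.1.2.1, cup_eq_zero hI hF.2 hK.1, LinearMap.mem_ker.1 hK.2,
    map_zero, smul_zero, add_zero]

lemma coboundary_cup (hI : I * I = ⊥) (hF : F ∈ coboundaries G I p)
    (hK : K ∈ cocyclesMod G I q) : cup G R p F K ∈ coboundaries G I (p + q) := by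
  cases p with
  | zero => simp [(Submodule.mem_bot R).1 hF]
  | succ p =>
    obtain ⟨C, hC, rfl⟩ := hF
    have h := d_cup hC.2.1 q K
    rw [cup_eq_zero hI hC hK.2, smul_zero, add_zero] at h
    rw [← h, add_right_comm]
    exact d_mem_coboundaries (cup_mem_cochains_left hC hK.1)

lemma cup_d_mem_coboundaries (hF : F ∈ cochains G ⊤ p) (hFK : cup G R p F K ∈ cochains G I (p + q))
    (h : cup G R (p + 1) (d G R p F) K = 0) :
    cup G R p F (d G R q K) ∈ coboundaries G I (p + q + 1) := by
  have hd := d_cup hF.2.1 q K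
  rw [h, zero_add] at hd
  rw [← Submodule.smul_mem_iff_of_isUnit _ (isUnit_one.neg.pow p), ← hd]
  exact d_mem_coboundaries hFK

lemma cup_coboundary (hI : I * I = ⊥) (hF : F ∈ cocyclesMod G I p)
    (hK : K ∈ coboundaries G I q) : cup G R p F K ∈ coboundaries G I (p + q) := by
  cases q with
  | zero => simp [(Submodule.mem_bot R).1 hK]
  | succ q =>
    obtain ⟨C, hC, rfl⟩ := hK
    exact cup_d_mem_coboundaries hF.1 (cup_mem_cochains_right hF.1 hC) (cup_eq_zero hI hF.2 hC)

lemma cocycle_cup_coboundary (hF : F ∈ cocycles G I p)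
    (hK : K ∈ coboundaries G ⊤ q) : cup G R p F K ∈ coboundaries G I (p + q) := by
  cases q with
  | zero => simp [(Submodule.mem_bot R).1 hK]
  | succ q =>
    obtain ⟨C, hC, rfl⟩ := hK
    refine cup_d_mem_coboundaries (cochains_mono le_top hF.1) (cup_mem_cochains_left hF.1 hC) ?_
    rw [LinearMap.mem_ker.1 hF.2, map_zero, LinearMap.zero_apply]

lemma reverse_sModEq (hF : F ∈ cocycles G I n) :
    reverse G R n F ≡ F [SMOD coboundaries G I n] := by
  have h := reverse_sub_mem_coboundaries hF.1
  rwa [LinearMap.mem_ker.1 hF.2, map_zero, sub_zero, ← SModEq.sub_mem] at h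

variable {X U : (ℕ → G) → R}

lemma cup_reverse_sModEq (hI : I * I = ⊥) (hU : U ∈ cocycles G I p) (hX : X ∈ cocyclesMod G I q) :
    cup G R p U (reverse G R q X) ≡ cup G R p U X [SMOD coboundaries G I (p + q)] := by
  have hV : act G R (homotopy R (q + 1)) (d G R q X) ∈ cochains G I q :=
    act_mem_cochains (homotopy_mem_operators _) hX.2
  have h := cocycle_cup_coboundary hU (reverse_sub_mem_coboundaries hX.1)
  rwa [map_sub, map_sub, cup_eq_zero hI hU.1 hV, sub_zero, ← SModEq.sub_mem] at h

lemma cup_comm (hI : I * I = ⊥) (hX : X ∈ cocyclesMod G I p) (hU : U ∈ cocycles G I q) :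
    cup G R p X U ≡ (-1 : R) ^ (p * q) • cup G R q U X [SMOD coboundaries G I (p + q)] := by
  have hrev : cup G R q (reverse G R q U) (reverse G R p X) ≡ cup G R q U (reverse G R p X)
      [SMOD coboundaries G I (q + p)] := by
    rw [SModEq.sub_mem, ← LinearMap.sub_apply, ← map_sub]
    exact coboundary_cup hI (SModEq.sub_mem.1 (reverse_sModEq hU)) (reverse_mem_cocyclesMod hX)
  calc cup G R p X U
      ≡ reverse G R (p + q) (cup G R p X U) [SMOD coboundaries G I (p + q)] :=
        (reverse_sModEq (cup_mem_cocycles hI hX hU)).symm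
    _ = (-1 : R) ^ (p * q) • cup G R q (reverse G R q U) (reverse G R p X) :=
        reverse_cup hX.1.2.1 hU.1.2.1
    _ ≡ (-1 : R) ^ (p * q) • cup G R q U X [SMOD coboundaries G I (p + q)] := by
        rw [add_comm p q]
        exact (hrev.trans (cup_reverse_sModEq hI hU hX)).smul _

variable {j : ℕ}

lemma power_mem_cocyclesMod (hX : X ∈ cocyclesMod G I j) (k : ℕ) :
    power j X k ∈ cocyclesMod G I (j * k) := by
  induction k with
  | zero =>
    exact ⟨⟨fun _ => trivial, fun _ _ _ => rfl, fun _ _ => rfl⟩,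
      Submodule.mem_comap.2 (d_one (G := G) (R := R) ▸ Submodule.zero_mem _)⟩
  | succ k ih => exact cup_mem_cocyclesMod ih hX

lemma cup_d_cup_sModEq (hI : I * I = ⊥) (hF : F ∈ cocyclesMod G I p)
    (hX : X ∈ cocyclesMod G I q) :
    cup G R (p + (q + 1)) (cup G R p F (d G R q X)) X
      ≡ cup G R (p + q) (cup G R p F X) (d G R q X)
        [SMOD coboundaries G I (p + (q + (q + 1)))] := by
  have hcomm := cup_comm hI hX (d_mem_cocycles hX)
  rw [(Nat.even_mul_succ_self q).neg_one_pow, one_smul, SModEq.comm, SModEq.sub_mem] at hcomm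
  rw [cup_assoc, cup_assoc, SModEq.sub_mem, ← map_sub]
  exact cup_coboundary hI hF hcomm

lemma d_power_sModEq (hI : I * I = ⊥) (hX : X ∈ cocyclesMod G I j) (k : ℕ) :
    d G R (j * (k + 1)) (power j X (k + 1))
      ≡ (∑ i ∈ Finset.range (k + 1), ((-1 : R) ^ j) ^ i) •
        cup G R (j * k) (power j X k) (d G R j X) [SMOD coboundaries G I (j * (k + 1) + 1)] := by
  induction k with
  | zero => simp [power, one_cup]
  | succ k ih =>
    have hP := power_mem_cocyclesMod hX (k + 1)
    have hdP := coboundary_cup hI (SModEq.sub_mem.1 ih) hX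
    rw [map_sub, map_smul, LinearMap.sub_apply, LinearMap.smul_apply, ← SModEq.sub_mem,
      add_right_comm] at hdP
    have hswap : cup G R (j * (k + 1) + 1) (cup G R (j * k) (power j X k) (d G R j X)) X
        ≡ cup G R (j * (k + 1)) (power j X (k + 1)) (d G R j X)
          [SMOD coboundaries G I (j * (k + 1) + j + 1)] := by
      have h := cup_d_cup_sModEq hI (power_mem_cocyclesMod hX k) hX
      rwa [← add_assoc, ← add_assoc, ← add_assoc, ← mul_add_one] at h
    rw [power, mul_add_one j (k + 1), d_cup hP.1.2.1, Finset.sum_range_succ, add_smul, pow_mul]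
    exact (hdP.trans (hswap.smul _)).add .rfl

lemma two_smul_cup_cup_mem_coboundaries (hI : I * I = ⊥) (hX : X ∈ cocyclesMod G I j)
    (hU : U ∈ cocycles G I q) (hj : Odd j) :
    (2 : R) • cup G R j X (cup G R j X U) ∈ coboundaries G I (j + (j + q)) := by
  have hswap : cup G R j X (cup G R j X U)
      ≡ (-1 : R) ^ (j * (j + q)) • cup G R j X (cup G R q U X)
        [SMOD coboundaries G I (j + (j + q))] := by
    have h := cup_comm hI hX (cup_mem_cocycles hI hX hU)
    rwa [cup_assoc] at h
  have hswap' : cup G R j X (cup G R j X U)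
      ≡ (-1 : R) ^ (j * q) • cup G R j X (cup G R q U X)
        [SMOD coboundaries G I (j + (j + q))] := by
    have h := cup_coboundary hI hX (SModEq.sub_mem.1 (cup_comm hI hX hU))
    rwa [map_sub, map_smul, ← SModEq.sub_mem] at h
  have hsign : (-1 : R) ^ (j * (j + q)) = - (-1) ^ (j * q) := by
    rw [mul_add, pow_add, (hj.mul hj).neg_one_pow, neg_one_mul]
  have h := hswap.add hswap'
  rwa [hsign, neg_smul, neg_add_cancel, ← two_smul R, SModEq.zero] at h

lemma two_smul_power_cup_d_mem_coboundaries (hI : I * I = ⊥) (hX : X ∈ cocyclesMod G I j)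
    (hj : Odd j) (k : ℕ) :
    (2 : R) • cup G R (j * (k + 2)) (power j X (k + 2)) (d G R j X)
      ∈ coboundaries G I (j * (k + 3) + 1) := by
  have h := cup_coboundary hI (power_mem_cocyclesMod hX k)
    (two_smul_cup_cup_mem_coboundaries hI hX (d_mem_cocycles hX) hj)
  rw [map_smul, ← cup_assoc, ← cup_assoc] at h
  rwa [show j * (k + 3) + 1 = j * k + (j + (j + (j + 1))) by ring]

lemma smul_power_cup_d_mem_coboundaries (hI : I * I = ⊥) (hX : X ∈ cocyclesMod G I j)
    (hj : Odd j) {k : ℕ} (hk : Even k) :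
    k • cup G R (j * k) (power j X k) (d G R j X) ∈ coboundaries G I (j * (k + 1) + 1) := by
  obtain ⟨_ | m, rfl⟩ := hk.exists_two_nsmul
  · simp
  · have h := two_smul_power_cup_d_mem_coboundaries hI hX hj (2 * m)
    rw [ofNat_smul_eq_nsmul] at h
    rw [smul_eq_mul, mul_comm 2, mul_smul, mul_comm _ 2]
    exact nsmul_mem h (m + 1)

theorem d_power_mem_coboundaries (hI : I * I = ⊥) (hX : X ∈ cocyclesMod G I j) (N : ℕ)
    (hkill : ∀ Z ∈ cocycles G I (j * N + 1), N • Z ∈ coboundaries G I (j * N + 1)) :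
    d G R (j * N) (power j X N) ∈ coboundaries G I (j * N + 1) := by
  obtain _ | k := N
  · exact (d_one (G := G) (R := R)).symm ▸ Submodule.zero_mem _
  rw [← SModEq.zero]
  refine (d_power_sModEq hI hX k).trans (SModEq.zero.2 ?_)
  have hcocycle := cup_mem_cocycles hI (power_mem_cocyclesMod hX k) (d_mem_cocycles hX)
  rw [← add_assoc, ← mul_add_one] at hcocycle
  have hZ := hkill _ hcocycle
  rcases j.even_or_odd with hj | hj
  · simpa [hj.neg_one_pow, ← Nat.cast_smul_eq_nsmul R] using hZ
  rw [hj.neg_one_pow, neg_one_geom_sum]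
  split_ifs with hk
  · simp
  · have h := smul_power_cup_d_mem_coboundaries hI hX hj (by grind : Even k)
    simpa [add_smul] using sub_mem hZ h

end Cohomology

section Comparison

variable {G : Type*}

lemma map_cupPow {S T : Type*} [CommRing S] [CommRing T] (φ : S →+* T) (j k : ℕ)
    (f : (Fin j → G) → S) (g : Fin (k * j) → G) :
    φ (cupPow G S j k f g) = cupPow G T j k (fun h => φ (f h)) g := by
  simp [cupPow]

variable [Group G]

/-- The homogeneous form of an inhomogeneous cochain, evaluated on the successive quotients
`(w i)⁻¹ * w (i + 1)`. -/
def homogenize {M : Type*} (n : ℕ) (f : (Fin n → G) → M) : (ℕ → G) → M :=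
  fun w => f fun i => (w i)⁻¹ * w (i + 1)

/-- The sequence `1, g 0, g 0 * g 1, …` of partial products, constant from the index `n` on.
Evaluating a homogeneous cochain at it gives back the inhomogeneous form. -/
def partialProducts {n : ℕ} (g : Fin n → G) (k : ℕ) : G := Fin.partialProd g (Fin.clamp k n)

lemma inv_partialProducts_mul {n : ℕ} (g : Fin n → G) (i : Fin n) :
    (partialProducts g i)⁻¹ * partialProducts g (i + 1) = g i := by
  have hcast : Fin.clamp i n = i.castSucc := by ext; simp
  have hsucc : Fin.clamp (i + 1) n = i.succ := by ext; simp
  rw [partialProducts, partialProducts, hcast, hsucc, Fin.partialProd_right_inv]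

lemma homogenize_partialProducts {M : Type*} {n : ℕ} (f : (Fin n → G) → M) (g : Fin n → G) :
    homogenize n f (partialProducts g) = f g :=
  congrArg f (funext (inv_partialProducts_mul g))

lemma mul_partialProducts_quotients {n k : ℕ} (w : ℕ → G) (hk : k ≤ n) :
    w 0 * partialProducts (fun i : Fin n => (w i)⁻¹ * w (i + 1)) k = w k := by
  have h := congrFun (Fin.partialProd_left_inv fun i : Fin (n + 1) => w i) (Fin.clamp k n)
  simpa [partialProducts, hk] using h

lemma map_gdiff {M N : Type*} [AddCommGroup M] [AddCommGroup N] (φ : M →+ N) (n : ℕ)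
    (f : (Fin n → G) → M) (g : Fin (n + 1) → G) :
    φ (gdiff G M n f g) = gdiff G N n (fun h => φ (f h)) g := by
  simp [gdiff]

variable {R : Type*} [CommRing R] {I : Ideal R} {n : ℕ}

lemma homogenize_dehomogenize {C : (ℕ → G) → R} (hC : C ∈ cochains G I n) :
    homogenize n (fun g => C (partialProducts g)) = C := by
  ext w
  rw [homogenize, ← hC.2.2 (w 0)]
  exact hC.2.1 fun k hk => mul_partialProducts_quotients w (Nat.lt_succ_iff.1 hk)

lemma homogenize_mem_cochains {f : (Fin n → G) → R} (hf : ∀ g, f g ∈ I) :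
    homogenize n f ∈ cochains G I n := by
  refine ⟨fun w => hf _, fun v w h => congrArg f (funext fun i => ?_), fun g w => ?_⟩
  · rw [h i (by grind), h (i + 1) (by grind)]
  · simp [homogenize, mul_assoc]

lemma contractNth_quotients (w : ℕ → G) (k : Fin (n + 1)) (t : Fin n) :
    Fin.contractNth k (· * ·) (fun i : Fin (n + 1) => (w i)⁻¹ * w (i + 1)) t
      = (w (coface (k + 1) t))⁻¹ * w (coface (k + 1) (t + 1)) := by
  rcases lt_trichotomy (t : ℕ) k with h | h | h
  · rw [Fin.contractNth_apply_of_lt _ _ _ _ h, coface_of_lt (by omega), coface_of_lt (by omega)]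
    rfl
  · rw [Fin.contractNth_apply_of_eq _ _ _ _ h, coface_of_lt (by omega), coface_of_le (by omega)]
    simp [mul_assoc]
  · rw [Fin.contractNth_apply_of_gt _ _ _ _ h, coface_of_le (by omega), coface_of_le (by omega)]
    rfl

lemma d_homogenize (n : ℕ) (f : (Fin n → G) → R) :
    d G R n (homogenize n f) = homogenize (n + 1) (gdiff G R n f) := by
  ext w
  have hzero : homogenize n f (w ∘ coface 0) = f fun i => (w (i + 1))⁻¹ * w (i + 1 + 1) := rfl
  have hsucc (k : Fin (n + 1)) : homogenize n f (w ∘ coface (k + 1))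
      = f (Fin.contractNth k (· * ·) fun i => (w i)⁻¹ * w (i + 1)) :=
    congrArg f (funext fun t => (contractNth_quotients w k t).symm)
  rw [d_apply, Finset.sum_range_succ', add_comm, ← Fin.sum_univ_eq_sum_range fun k =>
    (-1 : R) ^ (k + 1) * homogenize n f (w ∘ coface (k + 1)), hzero]
  simp only [hsucc]
  simp [homogenize, gdiff]

lemma gdiff_eq_zero_iff (f : (Fin n → G) → R) :
    gdiff G R n f = 0 ↔ d G R n (homogenize n f) = 0 := by
  rw [d_homogenize]
  refine ⟨fun h => by rw [h]; rfl, fun h => ?_⟩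
  ext g
  rw [← homogenize_partialProducts (gdiff G R n f), h]
  rfl

lemma power_homogenize_partialProducts (j k : ℕ) (f : (Fin j → G) → R) (g : Fin (k * j) → G) :
    power j (homogenize j f) k (partialProducts g) = cupPow G R j k f g := by
  rw [power_apply, cupPow, ← Fin.prod_univ_eq_prod_range
    fun i => homogenize j f fun t => partialProducts g (t + j * i)]
  refine Finset.prod_congr rfl fun i _ => congrArg f (funext fun t => ?_)
  have h : (i : ℕ) * j + t < k * j := by
    calc (i : ℕ) * j + t < (i + 1) * j := by rw [add_one_mul]; omega
      _ ≤ k * j := Nat.mul_le_mul_right j i.2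
  change (partialProducts g (t + j * i))⁻¹ * partialProducts g (t + 1 + j * i) = _
  rw [show (t : ℕ) + j * i = i * j + t by ring, show (t : ℕ) + 1 + j * i = i * j + t + 1 by ring]
  exact inv_partialProducts_mul g ⟨i * j + t, h⟩

lemma homogenize_mem_cocyclesMod {f : (Fin n → G) → R}
    (hf : gdiff G (R ⧸ I) n (fun g => Ideal.Quotient.mk I (f g)) = 0) :
    homogenize n f ∈ cocyclesMod G I n := by
  refine ⟨homogenize_mem_cochains fun _ => trivial, Submodule.mem_comap.2 ?_⟩
  rw [d_homogenize]
  refine homogenize_mem_cochains fun g => Ideal.Quotient.eq_zero_iff_mem.1 ?_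
  exact (map_gdiff (Ideal.Quotient.mk I).toAddMonoidHom n f g).trans (congrFun hf g)

lemma nsmul_mem_coboundaries {N : ℕ} (hkill : ∀ f : (Fin (n + 1) → G) → I,
      gdiff G I (n + 1) f = 0 → ∃ c, N • f = gdiff G I n c)
    {Z : (ℕ → G) → R} (hZ : Z ∈ cocycles G I (n + 1)) : N • Z ∈ coboundaries G I (n + 1) := by
  let z : (Fin (n + 1) → G) → I := fun g => ⟨Z (partialProducts g), hZ.1.1 _⟩
  have hz : gdiff G R (n + 1) (fun g => (z g : R)) = 0 := by
    rw [gdiff_eq_zero_iff]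
    exact (congrArg _ (homogenize_dehomogenize hZ.1)).trans (LinearMap.mem_ker.1 hZ.2)
  obtain ⟨c, hc⟩ := hkill z <| funext fun g => Subtype.ext <|
    (map_gdiff I.subtype.toAddMonoidHom (n + 1) z g).trans (congrFun hz g)
  refine ⟨homogenize n fun g => (c g : R), homogenize_mem_cochains fun g => (c g).2, ?_⟩
  rw [d_homogenize, ← homogenize_dehomogenize hZ.1]
  ext w
  have hcw := congrArg I.subtype (congrFun hc fun i => (w i)⁻¹ * w (i + 1))
  rw [Pi.smul_apply, map_nsmul] at hcw
  exact (map_gdiff I.subtype.toAddMonoidHom n c _).symm.trans hcw.symm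

end Comparison

end

end HomogeneousCochain

open HomogeneousCochain in
theorem cup_power_lifts_to_R_general {R : Type*} [CommRing R] {G : Type*} [Group G]
    {I : Ideal R} (hI : I * I = ⊥) (N j : ℕ)
    (hkill : ∀ f : (Fin (N * j + 1) → G) → I, gdiff G I (N * j + 1) f = 0 →
      ∃ c, N • f = gdiff G I (N * j) c)
    (x : (Fin j → G) → R ⧸ I) (hx : gdiff G (R ⧸ I) j x = 0) :
    ∃ y : (Fin (N * j) → G) → R, gdiff G R (N * j) y = 0 ∧
      (fun g => Ideal.Quotient.mk I (y g)) = cupPow G (R ⧸ I) j N x := by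
  let f : (Fin j → G) → R := fun g => (x g).out
  have hfx : (fun g => Ideal.Quotient.mk I (f g)) = x := funext fun g => Quotient.out_eq _
  have hX : homogenize j f ∈ cocyclesMod G I j :=
    homogenize_mem_cocyclesMod ((congrArg _ hfx).trans hx)
  have hpower := (power_mem_cocyclesMod hX N).1
  have hdpower := d_power_mem_coboundaries hI hX N
  rw [mul_comm j N] at hpower hdpower
  obtain ⟨C, hC, hdC⟩ := hdpower fun _ => nsmul_mem_coboundaries hkill
  have hY := sub_mem hpower (cochains_mono le_top hC)
  refine ⟨fun g => (power j (homogenize j f) N - C) (partialProducts g), ?_, ?_⟩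
  · rw [gdiff_eq_zero_iff, homogenize_dehomogenize hY, map_sub, hdC, sub_self]
  · ext g
    have hCg := Ideal.Quotient.eq_zero_iff_mem.2 (hC.1 (partialProducts g))
    simp only [Pi.sub_apply, map_sub, hCg, sub_zero, power_homogenize_partialProducts, map_cupPow,
      hfx]

theorem cup_power_lifts_to_R
    (R : Type u) [CommRing R] [IsNoetherianRing R] [IsLocalRing R]
    (p : ℕ) (hp : p.Prime) [CharP (IsLocalRing.ResidueField R) p]
    (hplocal : ∀ q : ℕ, q.Prime → q ≠ p → IsUnit (q : R))
    (G : Type*) [Group G] [Finite G] (n : ℕ)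
    (hkill : ∀ (M : Type u) [AddCommGroup M] [Module R M],
      ∀ i : ℕ, 1 ≤ i → ∀ f : (Fin i → G) → M, gdiff G M i f = 0 →
        ∃ (m : ℕ) (hm : m + 1 = i) (c : (Fin m → G) → M),
          (p ^ n : ℕ) • f = fun g => gdiff G M m c (fun t => g (Fin.cast hm t)))
    (I : Ideal R) (hI : I * I = ⊥) :
    ∀ j : ℕ, 1 ≤ j → ∀ x : (Fin j → G) → R ⧸ I, gdiff G (R ⧸ I) j x = 0 →
      ∃ y : (Fin (p ^ n * j) → G) → R,
        gdiff G R (p ^ n * j) y = 0 ∧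
        ∃ (m : ℕ) (hm : m + 1 = p ^ n * j) (c : (Fin m → G) → R ⧸ I),
          ((fun g => Ideal.Quotient.mk I (y g)) - cupPow G (R ⧸ I) j (p ^ n) x)
            = fun g => gdiff G (R ⧸ I) m c (fun t => g (Fin.cast hm t)) := by
  intro j hj x hx
  have hdegree : p ^ n * j - 1 + 1 = p ^ n * j :=
    Nat.sub_add_cancel (Nat.mul_pos (pow_pos hp.pos n) hj)
  obtain ⟨y, hy, hyx⟩ := cup_power_lifts_to_R_general hI (p ^ n) j
    (fun f hf => by
      obtain ⟨m, hm, c, hc⟩ := hkill I (p ^ n * j + 1) (Nat.succ_pos _) f hf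
      obtain rfl := Nat.succ.inj hm
      exact ⟨c, hc⟩) x hx
  refine ⟨y, hy, p ^ n * j - 1, hdegree, 0, ?_⟩
  rw [hyx, sub_self]
  ext g
  simp [gdiff]
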